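/- (Theorem 3, LMI characterization of half-cramped phase-bounded systems) Let A, B, C, D be real matrices of sizes n×n, n×m, m×n, m×m with A Hurwitz stable, (A,B) controllable and (C,A) observable, let α ∈ Set.Ioc (π/2) π, set η = α − π/2, and let G(s) = C(s•1 − A)⁻¹B + D over ℂ. For ε ∈ ({1, −1} : Set ℝ) write e_ε = Complex.exp(ε*η*Complex.I) and M_ε = Matrix.fromBlocks 0 (−(star e_ε)•Cᵀ) (−e_ε•C) (−(e_ε•D + (star e_ε)•Dᵀ)) (real matrices coerced to ℂ). Then the following are equivalent: (a) G is half-cramped with Φ∞(G) < α, i.e., there exists ε ∈ {1, −1} such that for all ω ≥ 0 the Hermitian matrix e_ε • G(ω*I) + (star e_ε) • (G(ω*I))ᴴ is positive definite and e_ε•(D:Matrix _ _ ℂ) + (star e_ε)•(Dᵀ:Matrix _ _ ℂ) is positive definite; (b) there exist ε ∈ {1, −1} and Hermitian matrices X, Y ∈ Matrix (Fin n) (Fin n) ℂ with Y.PosDef such that, with K = Matrix.fromBlocks (A:Matrix _ _ ℂ) B 1 0 and P = Matrix.fromBlocks 0 (X + Complex.I•Y) (X − Complex.I•Y) 0, the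 matrix −(Kᴴ * P * K + M_ε) is positive definite. -/

import Mathlib

open Matrix
open scoped ComplexOrder Real

/-- The transfer function `G(s) = C (sI - A)⁻¹ B + D` of a real state-space system,
with all matrices coerced to `ℂ`. -/
noncomputable def transferFunction {n m : ℕ} (A : Matrix (Fin n) (Fin n) ℝ)
    (B : Matrix (Fin n) (Fin m) ℝ) (C : Matrix (Fin m) (Fin n) ℝ)
    (D : Matrix (Fin m) (Fin m) ℝ) (s : ℂ) : Matrix (Fin m) (Fin m) ℂ :=
  C.map Complex.ofReal * (s • (1 : Matrix (Fin n) (Fin n) ℂ) - A.map Complex.ofReal)⁻¹ *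
    B.map Complex.ofReal + D.map Complex.ofReal

/-- A real square matrix is Hurwitz stable if all its complex eigenvalues have
negative real part. -/
def IsHurwitz {n : ℕ} (A : Matrix (Fin n) (Fin n) ℝ) : Prop :=
  ∀ μ ∈ spectrum ℂ (A.map Complex.ofReal), μ.re < 0

/-- The controllability matrix `[B, AB, …, A^{n-1}B]` of the pair `(A, B)`. -/
def ctrbMatrix {n m : ℕ} (A : Matrix (Fin n) (Fin n) ℝ) (B : Matrix (Fin n) (Fin m) ℝ) :
    Matrix (Fin n) (Fin n × Fin m) ℝ :=
  Matrix.of fun i p => (A ^ (p.1 : ℕ) * B) i p.2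

lemma nonpos_of_forall_le_mul {x y : ℝ} (h : ∀ t : ℝ, 0 < t → x ≤ t * y) : x ≤ 0 := by
  by_contra! hx
  have hy : 0 < y := by have := h 1 one_pos; linarith
  have := h (x / (2 * y)) (by positivity)
  have h2 : x / (2 * y) * y = x / 2 := by field_simp
  linarith

namespace Matrix

variable {ι n m r : Type*} [Fintype ι] [Fintype n] [Fintype m] [Fintype r]

/-- A Hermitian matrix has a Moore-Penrose inverse. -/
lemma IsHermitian.exists_pseudoinverse [DecidableEq n] {N : Matrix n n ℂ} (hN : N.IsHermitian) :
    ∃ Q : Matrix n n ℂ, N * Q * N = N ∧ Q * N * Q = Q ∧ (Q * N).IsHermitian := by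
  set U : Matrix n n ℂ := hN.eigenvectorUnitary.1
  set d : n → ℂ := RCLike.ofReal ∘ hN.eigenvalues with hd
  have hUU : star U * U = 1 := Unitary.coe_star_mul_self _
  have hspec : N = U * diagonal d * star U := by
    conv_lhs => rw [hN.spectral_theorem, Unitary.conjStarAlgAut_apply]
  have hmul (a b : n → ℂ) : U * diagonal a * star U * (U * diagonal b * star U) =
      U * diagonal (fun i => a i * b i) * star U := by
    rw [← diagonal_mul_diagonal]
    calc _ = U * diagonal a * (star U * U) * diagonal b * star U := by simp only [Matrix.mul_assoc]
      _ = _ := by rw [hUU]; simp only [Matrix.mul_assoc, Matrix.mul_one]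
  refine ⟨U * diagonal d⁻¹ * star U, ?_, ?_, ?_⟩
  · rw [hspec, hmul, hmul]
    simp
  · rw [hspec, hmul, hmul]
    congr 3
    ext i
    simp only [Pi.inv_apply]
    by_cases h : d i = 0 <;> simp [h]
  · rw [hspec, hmul]
    refine isHermitian_mul_mul_conjTranspose (A := diagonal _) U ?_
    refine isHermitian_diagonal_of_self_adjoint _ (funext fun i => ?_)
    simp [hd]

lemma exists_pseudoinverse [DecidableEq r] (F : Matrix n r ℂ) :
    ∃ G : Matrix r n ℂ, F * G * F = F ∧ G * F * G = G ∧ (G * F).IsHermitian := by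
  obtain ⟨Q, h1, h2, h3⟩ := (isHermitian_conjTranspose_mul_self F).exists_pseudoinverse
  refine ⟨Q * Fᴴ, ?_, ?_, ?_⟩
  · have : Fᴴ * F * (Q * (Fᴴ * F)) = Fᴴ * F * 1 := by
      simpa only [Matrix.mul_assoc, Matrix.mul_one] using h1
    rw [← sub_eq_zero, ← Matrix.mul_sub, conjTranspose_mul_self_mul_eq_zero, Matrix.mul_sub,
      sub_eq_zero] at this
    simpa only [Matrix.mul_assoc, Matrix.mul_one] using this
  · simpa only [Matrix.mul_assoc] using congr($h2 * Fᴴ)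
  · simpa only [Matrix.mul_assoc] using h3

/-- If `E Fᴴ` is positive semidefinite, then some orthonormal basis consists of vectors `u` with
`F u = 0` or `E u = ω F u` for a real `ω ≥ 0`. -/
lemma exists_unitary_pencil [DecidableEq r] {E F : Matrix n r ℂ} (hS : (E * Fᴴ).PosSemidef) :
    ∃ U ∈ unitaryGroup r ℂ, ∀ k, F *ᵥ U.col k = 0 ∨
      ∃ ω : ℝ, 0 ≤ ω ∧ E *ᵥ U.col k = (ω : ℂ) • F *ᵥ U.col k := by
  obtain ⟨G, h1, h2, h3⟩ := exists_pseudoinverse F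
  set P := G * F with hP
  set S := E * Fᴴ with hSdef
  have hFP : F * P = F := by rw [hP, ← Matrix.mul_assoc, h1]
  have hPG : P * G = G := h2
  have hPP : P * P = P := by rw [hP, ← Matrix.mul_assoc, h2]
  have hPF : Fᴴ * Gᴴ = P := by rw [← conjTranspose_mul, ← hP, h3.eq]
  have hGP : Gᴴ * P = Gᴴ := by
    have := congr($hPG ᴴ); rwa [conjTranspose_mul, h3.eq] at this
  have hSE : S = F * Eᴴ := by rw [← hS.1.eq, hSdef, conjTranspose_mul, conjTranspose_conjTranspose]
  have hQ : (G * S * Gᴴ).PosSemidef := hS.mul_mul_conjTranspose_same G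
  have hEP : E * P = F * (G * S * Gᴴ) := by
    calc E * P = S * Gᴴ := by rw [← hPF, ← Matrix.mul_assoc]
      _ = F * P * Eᴴ * Gᴴ := by rw [hFP, hSE]
      _ = _ := by rw [hSE, hP]; simp only [Matrix.mul_assoc]
  have hT : (G * S * Gᴴ - (1 - P)).IsHermitian := hQ.1.sub (isHermitian_one.sub h3)
  refine ⟨hT.eigenvectorUnitary.1, SetLike.coe_mem _, fun k => ?_⟩
  rw [IsHermitian.eigenvectorUnitary_col_eq]
  have hk := hT.mulVec_eigenvectorBasis k
  set u : r → ℂ := ⇑(hT.eigenvectorBasis k)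
  set l := hT.eigenvalues k
  have hPu : (G * S * Gᴴ) *ᵥ u = (l : ℂ) • P *ᵥ u := by
    have := congr(P *ᵥ $hk)
    rw [mulVec_mulVec, Matrix.mul_sub, Matrix.mul_sub, Matrix.mul_one, hPP, sub_self, sub_zero,
      ← Matrix.mul_assoc, ← Matrix.mul_assoc, hPG] at this
    rw [this, mulVec_smul]; rfl
  have hPu' : -(u - P *ᵥ u) = (l : ℂ) • (u - P *ᵥ u) := by
    have : (G * S * Gᴴ) *ᵥ u - (u - P *ᵥ u) = (l : ℂ) • u := by
      simpa [sub_mulVec] using hk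
    rw [smul_sub, ← hPu, ← this]; abel
  by_cases hl : 0 ≤ l
  · have h0 : u - P *ᵥ u = 0 := by
      have : ((1 + l : ℝ) : ℂ) • (u - P *ᵥ u) = 0 := by
        push_cast
        rw [add_smul, one_smul, ← hPu']; abel
      refine (smul_eq_zero.1 this).resolve_left ?_
      exact_mod_cast (by linarith : 1 + l ≠ 0)
    refine Or.inr ⟨l, hl, ?_⟩
    have hu : u = P *ᵥ u := sub_eq_zero.1 h0
    calc E *ᵥ u = E *ᵥ P *ᵥ u := by rw [← hu]
      _ = F *ᵥ (G * S * Gᴴ) *ᵥ u := by rw [mulVec_mulVec, hEP, mulVec_mulVec]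
      _ = _ := by rw [hPu, mulVec_smul, ← hu]
  · left
    have hnn := hQ.re_dotProduct_nonneg u
    have hPP' : star u ⬝ᵥ P *ᵥ u = star (P *ᵥ u) ⬝ᵥ (P *ᵥ u) := by
      rw [star_mulVec, h3.eq, ← dotProduct_mulVec, mulVec_mulVec, hPP]
    rw [hPu, dotProduct_smul, hPP'] at hnn
    have h0 : 0 ≤ star (P *ᵥ u) ⬝ᵥ (P *ᵥ u) := dotProduct_star_self_nonneg _
    have hre : 0 ≤ (star (P *ᵥ u) ⬝ᵥ (P *ᵥ u)).re := (Complex.le_def.1 h0).1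
    have him : (star (P *ᵥ u) ⬝ᵥ (P *ᵥ u)).im = 0 := (Complex.le_def.1 h0).2.symm
    simp only [smul_eq_mul, RCLike.re_to_complex, Complex.re_ofReal_mul] at hnn
    have : star (P *ᵥ u) ⬝ᵥ (P *ᵥ u) = 0 := Complex.ext (by simp; nlinarith) (by simpa using him)
    rw [dotProduct_star_self_eq_zero] at this
    rw [← hFP, ← mulVec_mulVec, this, mulVec_zero]

lemma isOpen_setOf_re_dotProduct_neg [DecidableEq ι] :
    IsOpen {N : Matrix ι ι ℂ | ∀ x : ι → ℂ, x ≠ 0 → (star x ⬝ᵥ N *ᵥ x).re < 0} := by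
  have key : {N : Matrix ι ι ℂ | ∀ x : ι → ℂ, x ≠ 0 → (star x ⬝ᵥ N *ᵥ x).re < 0} =
      {N | ∀ x ∈ Metric.sphere (0 : ι → ℂ) 1, (star x ⬝ᵥ N *ᵥ x).re < 0} := by
    ext N
    refine ⟨fun h x hx => h x fun h0 => by simp [h0] at hx, fun h x hx => ?_⟩
    have hn : 0 < ‖x‖ := norm_pos_iff.2 hx
    have := h (((‖x‖⁻¹ : ℝ) : ℂ) • x) (by simp [norm_smul, hn.ne'])
    simp only [star_smul, mulVec_smul, dotProduct_smul, smul_dotProduct, smul_eq_mul,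
      Complex.star_def, Complex.conj_ofReal, Complex.re_ofReal_mul] at this
    have h2 : 0 < ‖x‖⁻¹ := by positivity
    by_contra! h3
    have := mul_nonneg h2.le (mul_nonneg h2.le h3)
    linarith
  rw [key, isOpen_iff_eventually]
  intro N hN
  refine (isCompact_sphere (0 : ι → ℂ) 1).eventually_forall_of_forall_eventually fun x hx => ?_
  have hc : Continuous fun z : Matrix ι ι ℂ × (ι → ℂ) => (star z.2 ⬝ᵥ z.1 *ᵥ z.2).re := by
    fun_prop
  exact hc.continuousAt.eventually_lt continuousAt_const (hN x hx)

lemma IsHermitian.posDef_of_re_pos {N : Matrix ι ι ℂ} (hN : N.IsHermitian)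
    (h : ∀ x : ι → ℂ, x ≠ 0 → 0 < (star x ⬝ᵥ N *ᵥ x).re) : N.PosDef :=
  PosDef.of_dotProduct_mulVec_pos hN fun x hx =>
    Complex.lt_def.2 ⟨h x hx, (hN.im_star_dotProduct_mulVec_self x).symm⟩

/-- A convex set of Hermitian matrices containing no negative definite matrix is separated from the
negative definite cone by a trace functional. -/
lemma exists_posSemidef_separating [DecidableEq ι] {T : Set (Matrix ι ι ℂ)} (hT : Convex ℝ T)
    (hne : T.Nonempty) (hherm : ∀ N ∈ T, N.IsHermitian) (hneg : ∀ N ∈ T, ¬ (-N).PosDef) :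
    ∃ Z : Matrix ι ι ℂ, Z.PosSemidef ∧ Z ≠ 0 ∧ ∀ N ∈ T, 0 ≤ (Z * N).trace.re := by
  set s := {N : Matrix ι ι ℂ | ∀ x : ι → ℂ, x ≠ 0 → (star x ⬝ᵥ N *ᵥ x).re < 0} with hs
  have hsmul {t : ℝ} (ht : 0 < t) {N} (hN : N ∈ s) : t • N ∈ s := fun x hx => by
    simpa [smul_mulVec] using mul_neg_of_pos_of_neg ht (hN x hx)
  have hadd {N N'} (hN : N ∈ s) (hN' : ∀ x : ι → ℂ, (star x ⬝ᵥ N' *ᵥ x).re ≤ 0) :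
      N + N' ∈ s := fun x hx => by
    simpa [add_mulVec] using add_neg_of_neg_of_nonpos (hN x hx) (hN' x)
  have hconv : Convex ℝ s := by
    intro N hN N' hN' a b ha hb hab x hx
    have h1 := hN x hx
    have h2 := hN' x hx
    simp only [add_mulVec, smul_mulVec, dotProduct_add, dotProduct_smul, Complex.add_re,
      Complex.real_smul, Complex.re_ofReal_mul]
    rcases ha.eq_or_lt with rfl | ha
    · simp_all
    · nlinarith [mul_neg_of_pos_of_neg ha h1]
  have hone : (-1 : Matrix ι ι ℂ) ∈ s := fun x hx => by
    have := (Complex.lt_def.1 (dotProduct_star_self_pos_iff.2 hx)).1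
    simpa [neg_mulVec] using this
  have hdisj : Disjoint s T := by
    rw [Set.disjoint_left]
    intro N hN hNT
    refine hneg N hNT ((hherm N hNT).neg.posDef_of_re_pos fun x hx => ?_)
    simpa [neg_mulVec] using hN x hx
  obtain ⟨f, u, hfs, hfT⟩ :=
    geometric_hahn_banach_open hconv isOpen_setOf_re_dotProduct_neg hT hdisj
  have hfs' {N} (hN : N ∈ s) : f N ≤ 0 := by
    refine nonpos_of_forall_le_mul (y := u) fun t ht => ?_
    have := hfs _ (hsmul (inv_pos.2 ht) hN)
    rw [map_smul, smul_eq_mul, inv_mul_lt_iff₀ ht] at this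
    exact this.le
  have hu : 0 ≤ u := by
    have := nonpos_of_forall_le_mul (x := -u) (y := f 1) fun t ht => by
      have := hfs _ (hsmul ht hone)
      rw [map_smul, map_neg, smul_eq_mul] at this
      linarith
    linarith
  have hfs0 {N : Matrix ι ι ℂ} (hN : ∀ x : ι → ℂ, (star x ⬝ᵥ N *ᵥ x).re ≤ 0) : f N ≤ 0 := by
    refine nonpos_of_forall_le_mul (y := f 1) fun t ht => ?_
    have := hfs' (hadd (hsmul ht hone) hN)
    rw [map_add, map_smul, map_neg, smul_eq_mul] at this
    linarith
  let fc : Matrix ι ι ℂ →ₗ[ℂ] ℂ := Module.Dual.extendRCLike f.toLinearMap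
  have hfc (N) : (fc N).re = f N := Module.Dual.re_extendRCLike_apply (𝕜 := ℂ) f.toLinearMap N
  let Z₀ : Matrix ι ι ℂ := of fun j i => fc (single i j 1)
  have hZ₀ (N) : (Z₀ * N).trace = fc N := by
    conv_rhs => rw [matrix_eq_sum_single N]
    simp only [map_sum]
    rw [trace, Finset.sum_comm]
    simp only [diag_apply, mul_apply]
    refine Finset.sum_congr rfl fun i _ => Finset.sum_congr rfl fun j _ => ?_
    have : single j i (N j i) = N j i • single j i (1 : ℂ) := by simp [smul_single]
    rw [this, map_smul]
    simp [Z₀, mul_comm]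
  let Z : Matrix ι ι ℂ := (2⁻¹ : ℝ) • (Z₀ + Z₀ᴴ)
  have hZf {N : Matrix ι ι ℂ} (hN : N.IsHermitian) : (Z * N).trace.re = f N := by
    have : (Z₀ᴴ * N).trace.re = f N := by
      rw [← hfc, ← hZ₀, trace_mul_comm, ← hN.eq, ← conjTranspose_mul, trace_conjTranspose]
      simp [hN.eq]
    simp only [Z, Matrix.smul_mul, Matrix.add_mul, trace_smul, trace_add, Complex.smul_re,
      Complex.add_re, this, hZ₀, hfc, smul_eq_mul]
    ring
  have hZh : Z.IsHermitian := by
    simp only [Z, IsHermitian, conjTranspose_smul, conjTranspose_add, conjTranspose_conjTranspose]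
    rw [add_comm]; simp
  refine ⟨Z, PosSemidef.of_dotProduct_mulVec_nonneg hZh fun x => ?_, ?_, fun N hN => ?_⟩
  · have hx : (vecMulVec x (star x)).IsHermitian := (posSemidef_vecMulVec_self_star x).1
    have h1 : star x ⬝ᵥ Z *ᵥ x = (Z * vecMulVec x (star x)).trace := by
      rw [mul_vecMulVec, trace_vecMulVec, dotProduct_comm]
    rw [Complex.le_def]
    refine ⟨?_, (hZh.im_star_dotProduct_mulVec_self x).symm⟩
    rw [h1, hZf hx]
    have := hfs0 (N := -vecMulVec x (star x)) fun y => by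
      have := (posSemidef_vecMulVec_self_star x).re_dotProduct_nonneg y
      simpa [neg_mulVec] using this
    simpa using this
  · intro h0
    obtain ⟨N, hN⟩ := hne
    have h1 := hfT N hN
    have h2 := hfs _ hone
    rw [← hZf (hherm N hN), h0] at h1
    rw [← hZf isHermitian_one.neg, h0] at h2
    simp at h1 h2
    linarith
  · rw [hZf (hherm N hN)]
    exact hu.trans (hfT N hN)

open scoped MatrixOrder in
lemma PosSemidef.exists_eq_mul_conjTranspose [DecidableEq ι] {Z : Matrix ι ι ℂ}
    (hZ : Z.PosSemidef) : ∃ W : Matrix ι ι ℂ, Z = W * Wᴴ := by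
  obtain ⟨W, rfl⟩ := CStarAlgebra.nonneg_iff_eq_star_mul_self.mp hZ.nonneg
  exact ⟨Wᴴ, by rw [conjTranspose_conjTranspose]; rfl⟩

lemma trace_eq_sum_star_dotProduct_col [DecidableEq r] {U : Matrix r r ℂ}
    (hU : U ∈ unitaryGroup r ℂ) (N : Matrix r r ℂ) :
    N.trace = ∑ k, star (U.col k) ⬝ᵥ N *ᵥ U.col k := by
  have h : N.trace = (star U * N * U).trace := by
    rw [trace_mul_cycle, mem_unitaryGroup_iff.1 hU, Matrix.one_mul]
  rw [h, trace]
  refine Finset.sum_congr rfl fun k _ => ?_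
  rw [diag_apply, Matrix.mul_assoc, mul_apply]
  rfl

/-- The matrix `Kᴴ P K`, `K = [A B; 1 0]`, `P = [0 X + iY; X - iY 0]`, of the generalized KYP lemma
on the nonnegative imaginary axis. -/
noncomputable def kypMatrix {k : Type*} [DecidableEq n] (A : Matrix n n ℂ) (B : Matrix n k ℂ)
    (X Y : Matrix n n ℂ) : Matrix (n ⊕ k) (n ⊕ k) ℂ :=
  (fromBlocks A B (1 : Matrix n n ℂ) 0)ᴴ *
    fromBlocks 0 (X + Complex.I • Y) (X - Complex.I • Y) 0 *
    fromBlocks A B (1 : Matrix n n ℂ) 0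

lemma dotProduct_kypMatrix_mulVec [DecidableEq n] (A : Matrix n n ℂ) (B : Matrix n m ℂ)
    (X Y : Matrix n n ℂ) (f : n → ℂ) (h : m → ℂ) :
    star (Sum.elim f h) ⬝ᵥ kypMatrix A B X Y *ᵥ Sum.elim f h =
      star (A *ᵥ f + B *ᵥ h) ⬝ᵥ (X + Complex.I • Y) *ᵥ f +
        star f ⬝ᵥ (X - Complex.I • Y) *ᵥ (A *ᵥ f + B *ᵥ h) := by
  have hK : fromBlocks A B (1 : Matrix n n ℂ) 0 *ᵥ Sum.elim f h =
      Sum.elim (A *ᵥ f + B *ᵥ h) f := by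
    simp [fromBlocks_mulVec]
  rw [kypMatrix, ← mulVec_mulVec, ← mulVec_mulVec, hK, dotProduct_mulVec, ← star_mulVec, hK,
    fromBlocks_mulVec]
  simp [Function.star_sumElim, sumElim_dotProduct_sumElim]

lemma trace_mul_kypMatrix [DecidableEq n] (A : Matrix n n ℂ) (B : Matrix n m ℂ)
    (X Y : Matrix n n ℂ) (F : Matrix n r ℂ) (H : Matrix m r ℂ) :
    (fromRows F H * (fromRows F H)ᴴ * kypMatrix A B X Y).trace =
      (X * (F * (A * F + B * H)ᴴ + (A * F + B * H) * Fᴴ)).trace +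
        (Y * (Complex.I • (F * (A * F + B * H)ᴴ - (A * F + B * H) * Fᴴ))).trace := by
  set E := A * F + B * H with hE
  have hK : fromBlocks A B (1 : Matrix n n ℂ) 0 * fromRows F H = fromRows E F := by
    simp [fromBlocks_mul_fromRows, hE]
  have hPW : fromBlocks 0 (X + Complex.I • Y) (X - Complex.I • Y) 0 * fromRows E F =
      fromRows ((X + Complex.I • Y) * F) ((X - Complex.I • Y) * E) := by
    simp [fromBlocks_mul_fromRows]
  calc _ = ((fromBlocks A B (1 : Matrix n n ℂ) 0 * fromRows F H)ᴴ *
        (fromBlocks 0 (X + Complex.I • Y) (X - Complex.I • Y) 0 *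
          (fromBlocks A B (1 : Matrix n n ℂ) 0 * fromRows F H))).trace := by
        rw [kypMatrix, conjTranspose_mul, Matrix.mul_assoc, trace_mul_comm]
        simp only [Matrix.mul_assoc]
    _ = (Eᴴ * ((X + Complex.I • Y) * F)).trace + (Fᴴ * ((X - Complex.I • Y) * E)).trace := by
        rw [hK, hPW, conjTranspose_fromRows_eq_fromCols_conjTranspose, fromCols_mul_fromRows,
          trace_add]
    _ = ((X + Complex.I • Y) * (F * Eᴴ)).trace + ((X - Complex.I • Y) * (E * Fᴴ)).trace := by
        rw [trace_mul_comm, trace_mul_comm Fᴴ]; simp only [Matrix.mul_assoc]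
    _ = _ := by
        simp only [Matrix.add_mul, Matrix.sub_mul, Matrix.mul_add, Matrix.mul_sub,
          Matrix.smul_mul, Matrix.mul_smul, trace_add, trace_sub, trace_smul, smul_sub]
        ring

lemma kypMatrix_smul_add_smul {k : Type*} [DecidableEq n] (A : Matrix n n ℂ) (B : Matrix n k ℂ)
    (a b : ℝ) (X₁ X₂ Y₁ Y₂ : Matrix n n ℂ) :
    kypMatrix A B (a • X₁ + b • X₂) (a • Y₁ + b • Y₂) =
      a • kypMatrix A B X₁ Y₁ + b • kypMatrix A B X₂ Y₂ := by
  have hP : fromBlocks 0 (a • X₁ + b • X₂ + Complex.I • (a • Y₁ + b • Y₂))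
      (a • X₁ + b • X₂ - Complex.I • (a • Y₁ + b • Y₂)) 0 =
      a • fromBlocks 0 (X₁ + Complex.I • Y₁) (X₁ - Complex.I • Y₁) 0 +
        b • fromBlocks 0 (X₂ + Complex.I • Y₂) (X₂ - Complex.I • Y₂) 0 := by
    simp only [fromBlocks_smul, fromBlocks_add, smul_zero, add_zero]
    congr 1 <;> module
  simp only [kypMatrix, hP, Matrix.mul_add, Matrix.add_mul, Matrix.mul_smul, Matrix.smul_mul]

/-- Generalized KYP lemma on the nonnegative imaginary axis, strict inequality, hard direction. -/
theorem exists_kyp_certificate [DecidableEq n] [DecidableEq m] (A : Matrix n n ℂ)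
    (B : Matrix n m ℂ) {M : Matrix (n ⊕ m) (n ⊕ m) ℂ} (hM : M.IsHermitian)
    (hfin : ∀ ω : ℝ, 0 ≤ ω → ∀ f h, A *ᵥ f + B *ᵥ h = ((ω : ℂ) * Complex.I) • f →
      Sum.elim f h ≠ 0 → (star (Sum.elim f h) ⬝ᵥ M *ᵥ Sum.elim f h).re < 0)
    (hinf : ∀ h : m → ℂ, h ≠ 0 →
      (star (Sum.elim (0 : n → ℂ) h) ⬝ᵥ M *ᵥ Sum.elim 0 h).re < 0) :
    ∃ X Y : Matrix n n ℂ, X.IsHermitian ∧ Y.PosDef ∧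
      (-(kypMatrix A B X Y + M)).PosDef := by
  by_contra! hcon
  obtain ⟨Z, hZ, hZ0, hZT⟩ := exists_posSemidef_separating
    (T := {N | ∃ X Y : Matrix n n ℂ, X.IsHermitian ∧ Y.PosDef ∧ N = kypMatrix A B X Y + M}) (by
      rintro _ ⟨X₁, Y₁, hX₁, hY₁, rfl⟩ _ ⟨X₂, Y₂, hX₂, hY₂, rfl⟩ a b ha hb hab
      refine ⟨a • X₁ + b • X₂, a • Y₁ + b • Y₂, ?_, ?_, ?_⟩
      · exact (hX₁.smul (IsSelfAdjoint.all a)).add (hX₂.smul (IsSelfAdjoint.all b))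
      · rcases ha.eq_or_lt with rfl | ha
        · obtain rfl : b = 1 := by linarith
          simpa using hY₂
        · exact (hY₁.smul ha).add_posSemidef (hY₂.posSemidef.smul hb)
      · have hMM : M = a • M + b • M := by rw [← add_smul, hab, one_smul]
        rw [kypMatrix_smul_add_smul, smul_add, smul_add, add_add_add_comm, ← hMM])
    ⟨_, 0, 1, isHermitian_zero, PosDef.one, rfl⟩
    (by
      rintro _ ⟨X, Y, hX, hY, rfl⟩
      refine IsHermitian.add (isHermitian_conjTranspose_mul_mul _ ?_) hM
      refine IsHermitian.fromBlocks isHermitian_zero ?_ isHermitian_zero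
      simp [conjTranspose_add, conjTranspose_smul, hX.eq, hY.1.eq, sub_eq_add_neg])
    (by rintro _ ⟨X, Y, hX, hY, rfl⟩; exact hcon X Y hX hY)
  obtain ⟨W, rfl⟩ := hZ.exists_eq_mul_conjTranspose
  obtain ⟨F, H, rfl⟩ : ∃ F H, W = fromRows F H := ⟨W.toRows₁, W.toRows₂, by simp⟩
  set E := A * F + B * H with hE
  set c := (fromRows F H * (fromRows F H)ᴴ * M).trace.re with hc
  set R := F * Eᴴ + E * Fᴴ with hR
  set S := Complex.I • (F * Eᴴ - E * Fᴴ) with hS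
  have hRh : R.IsHermitian := by
    simp [IsHermitian, hR, add_comm]
  have hSh : S.IsHermitian := by
    simp only [IsHermitian, hS, conjTranspose_smul, conjTranspose_sub, conjTranspose_mul,
      conjTranspose_conjTranspose, Complex.star_def, Complex.conj_I]
    module
  have h0 (X Y : Matrix n n ℂ) (hX : X.IsHermitian) (hY : Y.PosDef) :
      0 ≤ (X * R).trace.re + (Y * S).trace.re + c := by
    have := hZT _ ⟨X, Y, hX, hY, rfl⟩
    rwa [Matrix.mul_add, trace_add, trace_mul_kypMatrix, Complex.add_re, Complex.add_re] at this
  have hcnn : 0 ≤ c := by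
    have := nonpos_of_forall_le_mul (x := -c) (y := ((1 : Matrix n n ℂ) * S).trace.re)
      fun t ht => by
        have := h0 0 (t • 1) isHermitian_zero (PosDef.one.smul ht)
        simp only [Matrix.zero_mul, Matrix.smul_mul, trace_smul, Complex.smul_re, trace_zero,
          Complex.zero_re, smul_eq_mul] at this
        linarith
    linarith
  have h1 (X Y : Matrix n n ℂ) (hX : X.IsHermitian) (hY : Y.PosDef) :
      0 ≤ (X * R).trace.re + (Y * S).trace.re := by
    have := nonpos_of_forall_le_mul (x := -((X * R).trace.re + (Y * S).trace.re)) (y := c)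
      fun t ht => by
        have := h0 (t⁻¹ • X) (t⁻¹ • Y) (hX.smul (IsSelfAdjoint.all _)) (hY.smul (inv_pos.2 ht))
        simp only [Matrix.smul_mul, trace_smul, Complex.smul_re, smul_eq_mul] at this
        have := mul_nonneg ht.le this
        field_simp at this
        linarith
    linarith
  have hR0 : R = 0 := by
    have hle := nonpos_of_forall_le_mul (x := (R * R).trace.re)
      (y := ((1 : Matrix n n ℂ) * S).trace.re) fun t ht => by
        have := h1 (-t⁻¹ • R) 1 (hRh.smul (IsSelfAdjoint.all _)) PosDef.one
        simp only [Matrix.smul_mul, trace_smul, Complex.smul_re, smul_eq_mul] at this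
        have := mul_nonneg ht.le this
        field_simp at this
        linarith
    have hps := (posSemidef_conjTranspose_mul_self R).trace_nonneg
    rw [hRh.eq, Complex.le_def] at hps
    refine trace_conjTranspose_mul_self_eq_zero_iff.1 ?_
    rw [hRh.eq]
    exact Complex.ext (le_antisymm hle hps.1) hps.2.symm
  have hSps : S.PosSemidef := by
    refine PosSemidef.of_dotProduct_mulVec_nonneg hSh fun v => ?_
    rw [Complex.le_def]
    refine ⟨?_, (hSh.im_star_dotProduct_mulVec_self v).symm⟩
    have hv : star v ⬝ᵥ S *ᵥ v = (vecMulVec v (star v) * S).trace := by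
      rw [trace_mul_comm, mul_vecMulVec, trace_vecMulVec, dotProduct_comm]
    have := nonpos_of_forall_le_mul (x := -(star v ⬝ᵥ S *ᵥ v).re)
      (y := ((1 : Matrix n n ℂ) * S).trace.re) fun t ht => by
        have := h1 0 (t • 1 + vecMulVec v (star v)) isHermitian_zero
          ((PosDef.one.smul ht).add_posSemidef (posSemidef_vecMulVec_self_star v))
        simp only [Matrix.zero_mul, trace_zero, Complex.zero_re, Matrix.add_mul, trace_add,
          Matrix.smul_mul, trace_smul, Complex.add_re, Complex.smul_re, smul_eq_mul] at this
        rw [hv]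
        linarith
    simpa using this
  have hEF : ((-Complex.I • E) * Fᴴ).PosSemidef := by
    have : (-Complex.I • E) * Fᴴ = (2⁻¹ : ℝ) • S := by
      have h2 : F * Eᴴ = -(E * Fᴴ) := eq_neg_of_add_eq_zero_left hR0
      rw [hS, h2, Matrix.smul_mul]
      module
    rw [this]
    exact hSps.smul (by norm_num)
  obtain ⟨U, hU, hUk⟩ := exists_unitary_pencil hEF
  have hw (k) : fromRows F H *ᵥ U.col k ≠ 0 →
      (star (fromRows F H *ᵥ U.col k) ⬝ᵥ M *ᵥ (fromRows F H *ᵥ U.col k)).re < 0 := by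
    intro hne
    rw [fromRows_mulVec] at hne ⊢
    rcases hUk k with hk | ⟨ω, hω, hk⟩
    · rw [hk] at hne ⊢
      exact hinf _ fun h => hne (by rw [h]; simp)
    · refine hfin ω hω _ _ ?_ hne
      rw [mulVec_mulVec, mulVec_mulVec, ← add_mulVec, ← hE, mul_comm, mul_smul, ← hk,
        smul_mulVec, smul_smul]
      simp
  have hcsum : c = ∑ k, (star (fromRows F H *ᵥ U.col k) ⬝ᵥ
      M *ᵥ (fromRows F H *ᵥ U.col k)).re := by
    rw [hc, Matrix.mul_assoc, trace_mul_comm, trace_eq_sum_star_dotProduct_col hU, Complex.re_sum]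
    refine Finset.sum_congr rfl fun k _ => ?_
    rw [Matrix.mul_assoc, ← mulVec_mulVec, ← mulVec_mulVec, dotProduct_mulVec, ← star_mulVec]
  have hle (k) : (star (fromRows F H *ᵥ U.col k) ⬝ᵥ
      M *ᵥ (fromRows F H *ᵥ U.col k)).re ≤ 0 := by
    by_cases h : fromRows F H *ᵥ U.col k = 0
    · simp [h]
    · exact (hw k h).le
  have hzero (k) : fromRows F H *ᵥ U.col k = 0 := by
    by_contra h
    have := Finset.sum_neg' (fun k _ => hle k) ⟨k, Finset.mem_univ k, hw k h⟩
    linarith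
  have hWU : fromRows F H * U = 0 := by
    ext i k
    exact congrFun (hzero k) i
  apply hZ0
  have : fromRows F H = 0 := by
    rw [← Matrix.mul_one (fromRows F H), ← mem_unitaryGroup_iff.1 hU, ← Matrix.mul_assoc, hWU,
      Matrix.zero_mul]
  rw [this, Matrix.zero_mul]

lemma IsHermitian.smul_add_star_smul {k : Type*} (e : ℂ) (G : Matrix k k ℂ) :
    (e • G + star e • Gᴴ).IsHermitian := by
  simp [IsHermitian, conjTranspose_add, conjTranspose_smul, add_comm]

lemma dotProduct_smul_add_star_smul_mulVec (e : ℂ) (G : Matrix m m ℂ) (h : m → ℂ) :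
    star h ⬝ᵥ (e • G + star e • Gᴴ) *ᵥ h =
      star h ⬝ᵥ e • G *ᵥ h + star (e • G *ᵥ h) ⬝ᵥ h := by
  rw [add_mulVec, dotProduct_add, smul_mulVec, smul_mulVec, star_smul, smul_dotProduct, star_mulVec,
    ← dotProduct_mulVec, dotProduct_smul (star e)]

/-- The matrix `M` with `star (f, h) ⬝ᵥ M *ᵥ (f, h) = -2 Re (star h ⬝ᵥ e • (C f + D h))`. -/
noncomputable def supplyMatrix {k l : Type*} (e : ℂ) (C : Matrix k l ℂ) (D : Matrix k k ℂ) :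
    Matrix (l ⊕ k) (l ⊕ k) ℂ :=
  fromBlocks 0 (-(star e • Cᴴ)) (-(e • C)) (-(e • D + star e • Dᴴ))

lemma isHermitian_supplyMatrix {k l : Type*} (e : ℂ) (C : Matrix k l ℂ) (D : Matrix k k ℂ) :
    (supplyMatrix e C D).IsHermitian := by
  refine IsHermitian.fromBlocks isHermitian_zero ?_ (IsHermitian.smul_add_star_smul e D).neg
  simp [conjTranspose_smul]

lemma dotProduct_supplyMatrix_mulVec (e : ℂ) (C : Matrix m n ℂ) (D : Matrix m m ℂ)
    (f : n → ℂ) (h : m → ℂ) :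
    star (Sum.elim f h) ⬝ᵥ supplyMatrix e C D *ᵥ Sum.elim f h =
      -(star h ⬝ᵥ e • (C *ᵥ f + D *ᵥ h) + star (e • (C *ᵥ f + D *ᵥ h)) ⬝ᵥ h) := by
  have hC : star f ⬝ᵥ Cᴴ *ᵥ h = star (C *ᵥ f) ⬝ᵥ h := by rw [star_mulVec, dotProduct_mulVec]
  have hD := dotProduct_smul_add_star_smul_mulVec e D h
  simp only [supplyMatrix, fromBlocks_mulVec, Function.star_sumElim, sumElim_dotProduct_sumElim,
    Sum.elim_comp_inl, Sum.elim_comp_inr, neg_mulVec, zero_mulVec, zero_add, dotProduct_add,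
    dotProduct_neg, hD, smul_mulVec, dotProduct_smul, hC, smul_add, star_add, add_dotProduct,
    star_smul, smul_dotProduct]
  ring

/-- Strict generalized KYP lemma on the nonnegative imaginary axis, for rotated positive
realness. -/
theorem posReal_iff_exists_kyp_certificate [DecidableEq n] [DecidableEq m] {A : Matrix n n ℂ}
    (hA : ∀ ω : ℝ, IsUnit (((ω : ℂ) * Complex.I) • (1 : Matrix n n ℂ) - A))
    (B : Matrix n m ℂ) (C : Matrix m n ℂ) (D : Matrix m m ℂ) (e : ℂ) {G : ℂ → Matrix m m ℂ}
    (hG : ∀ s, G s = C * (s • (1 : Matrix n n ℂ) - A)⁻¹ * B + D) :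
    ((∀ ω : ℝ, 0 ≤ ω →
        (e • G ((ω : ℂ) * Complex.I) + star e • (G ((ω : ℂ) * Complex.I))ᴴ).PosDef) ∧
      (e • D + star e • Dᴴ).PosDef) ↔
    ∃ X Y : Matrix n n ℂ, X.IsHermitian ∧ Y.PosDef ∧
      (-(kypMatrix A B X Y + supplyMatrix e C D)).PosDef := by
  have hdet (ω : ℝ) := (isUnit_iff_isUnit_det _).1 (hA ω)
  have hstate (ω : ℝ) (f : n → ℂ) (h : m → ℂ) :
      A *ᵥ f + B *ᵥ h = ((ω : ℂ) * Complex.I) • f ↔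
        f = (((ω : ℂ) * Complex.I) • (1 : Matrix n n ℂ) - A)⁻¹ *ᵥ B *ᵥ h := by
    have h1 : A *ᵥ f + B *ᵥ h = ((ω : ℂ) * Complex.I) • f ↔
        (((ω : ℂ) * Complex.I) • (1 : Matrix n n ℂ) - A) *ᵥ f = B *ᵥ h := by
      rw [sub_mulVec, smul_mulVec, one_mulVec, sub_eq_iff_eq_add', eq_comm]
    rw [h1]
    constructor
    · intro hf
      rw [← hf, mulVec_mulVec, nonsing_inv_mul _ (hdet ω), one_mulVec]
    · intro hf
      rw [hf, mulVec_mulVec, mul_nonsing_inv _ (hdet ω), one_mulVec]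
  have hout (s : ℂ) (h : m → ℂ) :
      C *ᵥ (s • (1 : Matrix n n ℂ) - A)⁻¹ *ᵥ B *ᵥ h + D *ᵥ h = G s *ᵥ h := by
    rw [hG, add_mulVec, mulVec_mulVec, mulVec_mulVec, Matrix.mul_assoc]
  constructor
  · rintro ⟨hω, hD⟩
    refine exists_kyp_certificate A B (isHermitian_supplyMatrix e C D) ?_ ?_
    · intro ω hω0 f h hf hne
      rw [hstate] at hf
      have hh : h ≠ 0 := by
        rintro rfl
        rw [mulVec_zero, mulVec_zero] at hf
        exact hne (by simp [hf])
      have := (hω ω hω0).re_dotProduct_pos hh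
      rw [dotProduct_smul_add_star_smul_mulVec] at this
      rw [dotProduct_supplyMatrix_mulVec, hf, hout, Complex.neg_re, neg_lt_zero]
      exact this
    · intro h hh
      have := hD.re_dotProduct_pos hh
      rw [dotProduct_smul_add_star_smul_mulVec] at this
      rw [dotProduct_supplyMatrix_mulVec, mulVec_zero, zero_add, Complex.neg_re, neg_lt_zero]
      exact this
  · rintro ⟨X, Y, -, hY, hpos⟩
    have hneg (f : n → ℂ) (h : m → ℂ) (hh : h ≠ 0) :
        (star (A *ᵥ f + B *ᵥ h) ⬝ᵥ (X + Complex.I • Y) *ᵥ f +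
          star f ⬝ᵥ (X - Complex.I • Y) *ᵥ (A *ᵥ f + B *ᵥ h)).re <
        (star h ⬝ᵥ e • (C *ᵥ f + D *ᵥ h) + star (e • (C *ᵥ f + D *ᵥ h)) ⬝ᵥ h).re := by
      have hne : Sum.elim f h ≠ 0 := fun h0 => hh (funext fun i => congrFun h0 (Sum.inr i))
      have := hpos.re_dotProduct_pos hne
      rw [neg_mulVec, dotProduct_neg, add_mulVec, dotProduct_add, dotProduct_kypMatrix_mulVec,
        dotProduct_supplyMatrix_mulVec, RCLike.re_to_complex] at this
      simp only [Complex.neg_re, Complex.add_re] at this ⊢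
      linarith
    refine ⟨fun ω hω0 => (IsHermitian.smul_add_star_smul _ _).posDef_of_re_pos fun h hh => ?_,
      (IsHermitian.smul_add_star_smul _ _).posDef_of_re_pos fun h hh => ?_⟩
    · rw [dotProduct_smul_add_star_smul_mulVec, ← hout]
      set f := (((ω : ℂ) * Complex.I) • (1 : Matrix n n ℂ) - A)⁻¹ *ᵥ B *ᵥ h with hf
      refine lt_of_le_of_lt ?_ (hneg f h hh)
      rw [(hstate ω f h).2 hf]
      have hYf := hY.posSemidef.re_dotProduct_nonneg f
      have : star (((ω : ℂ) * Complex.I) • f) ⬝ᵥ (X + Complex.I • Y) *ᵥ f +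
          star f ⬝ᵥ (X - Complex.I • Y) *ᵥ (((ω : ℂ) * Complex.I) • f) =
          ((2 * ω : ℝ) : ℂ) * (star f ⬝ᵥ Y *ᵥ f) := by
        simp only [star_smul, smul_dotProduct, mulVec_smul, dotProduct_smul, add_mulVec,
          sub_mulVec, smul_mulVec, dotProduct_add, dotProduct_sub, smul_eq_mul, star_mul',
          Complex.star_def, Complex.conj_ofReal, Complex.conj_I]
        push_cast
        linear_combination (-2 * ω * (star f ⬝ᵥ Y *ᵥ f)) * Complex.I_mul_I
      rw [this, Complex.re_ofReal_mul]
      exact mul_nonneg (by linarith) hYf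
    · rw [dotProduct_smul_add_star_smul_mulVec]
      simpa using hneg 0 h hh

end Matrix

lemma IsHurwitz.isUnit_smul_one_sub {n : ℕ} {A : Matrix (Fin n) (Fin n) ℝ} (hA : IsHurwitz A)
    {s : ℂ} (hs : 0 ≤ s.re) :
    IsUnit (s • (1 : Matrix (Fin n) (Fin n) ℂ) - A.map Complex.ofReal) := by
  rw [← Algebra.algebraMap_eq_smul_one]
  exact spectrum.notMem_iff.1 fun h => (hA s h).not_ge hs

/-- Theorem 3: LMI characterization of half-cramped systems with `Φ∞(G) < α` for
`α ∈ (π/2, π]`, via the generalized KYP lemma for the nonnegative imaginary axis. -/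
theorem halfCramped_sectored_real_lemma {n m : ℕ}
    (A : Matrix (Fin n) (Fin n) ℝ) (B : Matrix (Fin n) (Fin m) ℝ)
    (C : Matrix (Fin m) (Fin n) ℝ) (D : Matrix (Fin m) (Fin m) ℝ)
    (hA : IsHurwitz A)
    (hctrb : (ctrbMatrix A B).rank = n)
    (hobsv : (ctrbMatrix A.transpose C.transpose).rank = n)
    (α : ℝ) (hα : α ∈ Set.Ioc (π / 2) π) :
    ((∃ ε ∈ ({1, -1} : Set ℝ),
        (∀ ω : ℝ, 0 ≤ ω →
          (Complex.exp ((↑(ε * (α - π / 2)) : ℂ) * Complex.I) •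
              transferFunction A B C D ((ω : ℂ) * Complex.I) +
            star (Complex.exp ((↑(ε * (α - π / 2)) : ℂ) * Complex.I)) •
              (transferFunction A B C D ((ω : ℂ) * Complex.I)).conjTranspose).PosDef) ∧
        (Complex.exp ((↑(ε * (α - π / 2)) : ℂ) * Complex.I) • D.map Complex.ofReal +
          star (Complex.exp ((↑(ε * (α - π / 2)) : ℂ) * Complex.I)) •
            D.transpose.map Complex.ofReal).PosDef)) ↔
    ∃ ε ∈ ({1, -1} : Set ℝ), ∃ X Y : Matrix (Fin n) (Fin n) ℂ,
      X.IsHermitian ∧ Y.IsHermitian ∧ Y.PosDef ∧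
      (-((Matrix.fromBlocks (A.map Complex.ofReal) (B.map Complex.ofReal)
            (1 : Matrix (Fin n) (Fin n) ℂ) 0).conjTranspose *
          Matrix.fromBlocks 0 (X + Complex.I • Y) (X - Complex.I • Y) 0 *
          Matrix.fromBlocks (A.map Complex.ofReal) (B.map Complex.ofReal)
            (1 : Matrix (Fin n) (Fin n) ℂ) 0 +
        Matrix.fromBlocks 0
          (-(star (Complex.exp ((↑(ε * (α - π / 2)) : ℂ) * Complex.I)) •
              (C.map Complex.ofReal).transpose))
          (-(Complex.exp ((↑(ε * (α - π / 2)) : ℂ) * Complex.I) • C.map Complex.ofReal))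
          (-(Complex.exp ((↑(ε * (α - π / 2)) : ℂ) * Complex.I) • D.map Complex.ofReal +
            star (Complex.exp ((↑(ε * (α - π / 2)) : ℂ) * Complex.I)) •
              D.transpose.map Complex.ofReal)))).PosDef := by
  refine exists_congr fun ε => and_congr_right fun _ => ?_
  set e := Complex.exp ((↑(ε * (α - π / 2)) : ℂ) * Complex.I)
  have hconj {k l : ℕ} (N : Matrix (Fin k) (Fin l) ℝ) :
      N.transpose.map Complex.ofReal = (N.map Complex.ofReal)ᴴ := by
    ext i j
    simp
  have hC : (C.map Complex.ofReal).transpose = (C.map Complex.ofReal)ᴴ := hconj C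
  have key := posReal_iff_exists_kyp_certificate (G := transferFunction A B C D)
    (fun ω => hA.isUnit_smul_one_sub (s := (ω : ℂ) * Complex.I) (by simp))
    (B.map Complex.ofReal) (C.map Complex.ofReal) (D.map Complex.ofReal) e fun _ => rfl
  rw [hC, hconj D, key]
  refine exists_congr fun X => exists_congr fun Y => ?_
  exact ⟨fun ⟨hX, hY, h⟩ => ⟨hX, hY.1, hY, h⟩, fun ⟨hX, _, hY, h⟩ => ⟨hX, hY, h⟩⟩
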